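/- Let f : ℝ → ℝ be defined by f(t) = exp(1 − 1/(1 − t²)) for |t| < 1 and f(t) = 0 for |t| ≥ 1. Then the derivative of f attains its global minimum over ℝ at the point t₀ = 3^(−1/4); that is, for every t ∈ ℝ, deriv f t ≥ deriv f (3^(−1/4)). -/

import Mathlib

/-- The standard bump-type function `f(t) = exp(1 - 1/(1 - t²))` for `|t| < 1`,
and `f(t) = 0` for `|t| ≥ 1`. -/
noncomputable def bumpFn : ℝ → ℝ :=
  fun t => if |t| < 1 then Real.exp (1 - 1 / (1 - t ^ 2)) else 0

/-!
With `u = 1 / (1 - t²)`, the square of the derivative of `f` on `|t| < 1` is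
`4 (u - 1) u³ exp (2 (1 - u))`. The factors `u - 1` and `u` are each bounded by an exponential that
touches them at a chosen point `a`, because `1 + x ≤ exp x`. When `a` is the critical point,
`1 / (a - 1) + 3 / a = 2`, the exponentials cancel and the square is at most its value at `a`.
In terms of `t` the critical equation reads `3 t⁴ = 1`. So `|f'|` is maximal at `3 ^ (-1/4)`, where
`f'` is negative.
-/

open Real

theorem le_mul_exp_sub_div {a : ℝ} (ha : 0 < a) (x : ℝ) : x ≤ a * exp ((x - a) / a) :=
  calc x = a * ((x - a) / a + 1) := by field_simp; ring
    _ ≤ a * exp ((x - a) / a) := by gcongr; exact add_one_le_exp _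

theorem prod_sub_pow_mul_exp_neg_le {ι : Type*} (s : Finset ι) (b : ι → ℝ) (m : ι → ℕ) {a c u : ℝ}
    (ha : ∀ i ∈ s, b i < a) (hu : ∀ i ∈ s, b i ≤ u) (hc : ∑ i ∈ s, m i / (a - b i) = c) :
    (∏ i ∈ s, (u - b i) ^ m i) * exp (-(c * u)) ≤
      (∏ i ∈ s, (a - b i) ^ m i) * exp (-(c * a)) := by
  have factor_le : ∀ i ∈ s,
      (u - b i) ^ m i ≤ (a - b i) ^ m i * exp (m i / (a - b i) * (u - a)) := by
    intro i hi
    calc (u - b i) ^ m i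
        ≤ ((a - b i) * exp ((u - b i - (a - b i)) / (a - b i))) ^ m i :=
          pow_le_pow_left₀ (sub_nonneg.2 (hu i hi)) (le_mul_exp_sub_div (sub_pos.2 (ha i hi)) _) _
      _ = (a - b i) ^ m i * exp (m i / (a - b i) * (u - a)) := by
          rw [mul_pow, ← exp_nat_mul]
          ring_nf
  calc (∏ i ∈ s, (u - b i) ^ m i) * exp (-(c * u))
      ≤ (∏ i ∈ s, (a - b i) ^ m i * exp (m i / (a - b i) * (u - a))) * exp (-(c * u)) := by
        gcongr with i hi
        · exact fun i hi ↦ pow_nonneg (sub_nonneg.2 (hu i hi)) _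
        · exact factor_le i hi
    _ = (∏ i ∈ s, (a - b i) ^ m i) * exp (-(c * a)) := by
        rw [Finset.prod_mul_distrib, ← exp_sum, ← Finset.sum_mul, hc, mul_assoc, ← exp_add]
        ring_nf

theorem sub_one_mul_cube_mul_exp_neg_le {a u : ℝ} (ha : 1 < a) (hu : 1 ≤ u)
    (hcrit : 1 / (a - 1) + 3 / a = 2) :
    (u - 1) * u ^ 3 * exp (-(2 * u)) ≤ (a - 1) * a ^ 3 * exp (-(2 * a)) := by
  have hle := prod_sub_pow_mul_exp_neg_le Finset.univ ![1, 0] ![1, 3] (a := a) (c := 2) (u := u)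
    (by simp [Fin.forall_fin_two, ha, zero_lt_one.trans ha])
    (by simp [Fin.forall_fin_two, hu, zero_le_one.trans hu])
    (by simpa using hcrit)
  simpa using hle

theorem hasDerivAt_expNegInvGlue (x : ℝ) :
    HasDerivAt expNegInvGlue (expNegInvGlue x / x ^ 2) x := by
  simpa [div_eq_inv_mul] using expNegInvGlue.hasDerivAt_polynomial_eval_inv_mul 1 x

theorem bumpFn_of_abs_lt_one {t : ℝ} (ht : |t| < 1) : bumpFn t = exp (1 - 1 / (1 - t ^ 2)) :=
  if_pos ht

theorem bumpFn_of_one_le_abs {t : ℝ} (ht : 1 ≤ |t|) : bumpFn t = 0 :=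
  if_neg ht.not_gt

theorem bumpFn_nonneg (t : ℝ) : 0 ≤ bumpFn t := by
  unfold bumpFn
  split_ifs <;> positivity

theorem bumpFn_eq_exp_one_mul_expNegInvGlue (t : ℝ) :
    bumpFn t = exp 1 * expNegInvGlue (1 - t ^ 2) := by
  rcases lt_or_ge |t| 1 with ht | ht
  · have ht_sq : t ^ 2 < 1 := (sq_lt_one_iff_abs_lt_one t).2 ht
    rw [bumpFn_of_abs_lt_one ht, expNegInvGlue, if_neg (by linarith), ← exp_add, one_div,
      sub_eq_add_neg 1 (_⁻¹)]
  · have ht_sq : 1 ≤ t ^ 2 := (one_le_sq_iff_one_le_abs t).2 ht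
    rw [bumpFn_of_one_le_abs ht, expNegInvGlue.zero_of_nonpos (by linarith), mul_zero]

-- At `t = ±1` the quotient is `0` by convention, which is harmless because `bumpFn t = 0` there.
theorem hasDerivAt_bumpFn (t : ℝ) :
    HasDerivAt bumpFn (-(2 * t / (1 - t ^ 2) ^ 2 * bumpFn t)) t := by
  have inner : HasDerivAt (fun x : ℝ ↦ 1 - x ^ 2) (-(2 * t)) t := by
    simpa using (hasDerivAt_pow 2 t).const_sub 1
  have chain := ((hasDerivAt_expNegInvGlue (1 - t ^ 2)).comp t inner).const_mul (exp 1)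
  rw [funext bumpFn_eq_exp_one_mul_expNegInvGlue]
  exact chain.congr_deriv (by ring)

theorem deriv_bumpFn (t : ℝ) : deriv bumpFn t = -(2 * t / (1 - t ^ 2) ^ 2 * bumpFn t) :=
  (hasDerivAt_bumpFn t).deriv

theorem deriv_bumpFn_nonpos {t : ℝ} (ht : 0 ≤ t) : deriv bumpFn t ≤ 0 := by
  have := bumpFn_nonneg t
  rw [deriv_bumpFn, neg_nonpos]
  positivity

theorem deriv_bumpFn_sq_of_abs_lt_one {t u : ℝ} (ht : |t| < 1) (hu : u = 1 / (1 - t ^ 2)) :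
    deriv bumpFn t ^ 2 = 4 * exp 2 * ((u - 1) * u ^ 3 * exp (-(2 * u))) := by
  have ht_sq : 1 - t ^ 2 ≠ 0 := (sub_pos.2 ((sq_lt_one_iff_abs_lt_one t).2 ht)).ne'
  have rational_part : (2 * t / (1 - t ^ 2) ^ 2) ^ 2 = 4 * ((u - 1) * u ^ 3) := by
    rw [hu]
    field_simp
    ring
  have exp_part : exp (1 - u) ^ 2 = exp 2 * exp (-(2 * u)) := by
    rw [← exp_nat_mul, ← exp_add]
    push_cast
    ring_nf
  rw [deriv_bumpFn, neg_sq, mul_pow, bumpFn_of_abs_lt_one ht, ← hu, rational_part, exp_part]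
  ring

theorem abs_deriv_bumpFn_le {s : ℝ} (hs : s ^ 4 = 1 / 3) (t : ℝ) :
    |deriv bumpFn t| ≤ |deriv bumpFn s| := by
  rcases le_or_gt 1 |t| with ht | ht
  · rw [deriv_bumpFn t, bumpFn_of_one_le_abs ht, mul_zero, neg_zero, abs_zero]
    exact abs_nonneg _
  have hs_ne : s ≠ 0 := by
    rintro rfl
    norm_num at hs
  have hs_pos : 0 < s ^ 2 := by positivity
  have hs_lt : s ^ 2 < 1 := by nlinarith
  have one_sub_s_pos : 0 < 1 - s ^ 2 := sub_pos.2 hs_lt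
  have one_sub_t_pos : 0 < 1 - t ^ 2 := sub_pos.2 ((sq_lt_one_iff_abs_lt_one t).2 ht)
  have hcrit : 1 / (1 / (1 - s ^ 2) - 1) + 3 / (1 / (1 - s ^ 2)) = 2 := by
    have hsub : 1 / (1 - s ^ 2) - 1 = s ^ 2 / (1 - s ^ 2) := by field_simp; ring
    rw [hsub]
    field_simp
    linear_combination -3 * hs
  rw [← sq_le_sq, deriv_bumpFn_sq_of_abs_lt_one ht rfl,
    deriv_bumpFn_sq_of_abs_lt_one ((sq_lt_one_iff_abs_lt_one s).1 hs_lt) rfl]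
  gcongr 4 * exp 2 * ?_
  refine sub_one_mul_cube_mul_exp_neg_le ?_ ?_ hcrit
  · exact one_lt_one_div one_sub_s_pos (by linarith)
  · exact one_le_one_div one_sub_t_pos (by linarith [sq_nonneg t])

/-- The derivative of `f` attains its global minimum over `ℝ` at `t₀ = 3^(-1/4)`. -/
theorem bumpFn_deriv_min (t : ℝ) :
    deriv bumpFn ((3 : ℝ) ^ (-(1 / 4 : ℝ))) ≤ deriv bumpFn t := by
  set s : ℝ := (3 : ℝ) ^ (-(1 / 4 : ℝ)) with hs
  have s_nonneg : 0 ≤ s := by positivity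
  have s_pow_four : s ^ 4 = 1 / 3 := by
    rw [hs, ← rpow_mul_natCast (by norm_num)]
    norm_num [rpow_neg_one]
  calc deriv bumpFn s = -|deriv bumpFn s| := by
        rw [abs_of_nonpos (deriv_bumpFn_nonpos s_nonneg), neg_neg]
    _ ≤ -|deriv bumpFn t| := neg_le_neg (abs_deriv_bumpFn_le s_pow_four t)
    _ ≤ deriv bumpFn t := neg_abs_le _
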